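/- Every expansive topological dynamical system is hereditarily uniformly lowerable (HUL): if (X,T) is an expansive TDS, then for each non-empty compact subset K ⊆ X and each real h with 0 ≤ h ≤ h(T,K) there is a non-empty compact subset K_h ⊆ K with at most one limit point such that h(T,K_h) = h. -/

import Mathlib

open Filter Set Metric MeasureTheory
open scoped ENNReal Topology

noncomputable section

variable {X Y : Type*}

def IsSep [PseudoMetricSpace X] (T : X → X) (n : ℕ) (ε : ℝ) (E : Set X) : Prop :=
  E.Pairwise fun x y => ∃ i < n, ε < dist (T^[i] x) (T^[i] y)

def sepMaxCard [PseudoMetricSpace X] (T : X → X) (n : ℕ) (ε : ℝ) (K : Set X) : ℝ≥0∞ :=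
  ⨆ (E : Finset X) (_ : ↑E ⊆ K ∧ IsSep T n ε (↑E : Set X)), (E.card : ℝ≥0∞)

def sepEnt [PseudoMetricSpace X] (T : X → X) (ε : ℝ) (K : Set X) : EReal :=
  Filter.atTop.limsup fun n : ℕ => ENNReal.log (sepMaxCard T n ε K) / (n : EReal)

def subEnt [PseudoMetricSpace X] (T : X → X) (K : Set X) : EReal :=
  ⨆ (ε : ℝ) (_ : 0 < ε), sepEnt T ε K

/-- `(X,T)` is lowerable. -/
def Lowerable [PseudoMetricSpace X] (T : X → X) : Prop :=
  ∀ h : EReal, 0 ≤ h → h ≤ subEnt T (univ : Set X) →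
    ∃ K : Set X, K.Nonempty ∧ IsCompact K ∧ subEnt T K = h

/-- `(X,T)` is hereditarily lowerable. -/
def HerLowerable [PseudoMetricSpace X] (T : X → X) : Prop :=
  ∀ K : Set X, K.Nonempty → IsCompact K → ∀ h : EReal, 0 ≤ h → h ≤ subEnt T K →
    ∃ K' : Set X, K' ⊆ K ∧ K'.Nonempty ∧ IsCompact K' ∧ subEnt T K' = h

/-- `(X,T)` is hereditarily uniformly lowerable: the lowering subset can moreover be chosen
with at most one limit (accumulation) point. -/
def HUL [PseudoMetricSpace X] (T : X → X) : Prop :=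
  ∀ K : Set X, K.Nonempty → IsCompact K → ∀ h : EReal, 0 ≤ h → h ≤ subEnt T K →
    ∃ K' : Set X, K' ⊆ K ∧ K'.Nonempty ∧ IsCompact K' ∧ subEnt T K' = h ∧
      {x | AccPt x (𝓟 K')}.Subsingleton

/-- `Φ_ε(x) = {y : d(T^n x, T^n y) ≤ ε for all n ≥ 0}`. -/
def Phi [PseudoMetricSpace X] (T : X → X) (ε : ℝ) (x : X) : Set X :=
  {y | ∀ n : ℕ, dist (T^[n] x) (T^[n] y) ≤ ε}

/-- `h*_T(ε) = sup_x h(T, Φ_ε(x))`. -/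
def hStar [PseudoMetricSpace X] (T : X → X) (ε : ℝ) : EReal :=
  ⨆ x : X, subEnt T (Phi T ε x)

/-- `(X,T)` is asymptotically `h`-expansive: `h*_T(ε) → 0` as `ε → 0+`. -/
def AsympHExpansive [PseudoMetricSpace X] (T : X → X) : Prop :=
  Tendsto (fun ε : ℝ => hStar T ε) (𝓝[>] 0) (𝓝 (0 : EReal))

/-- `T^n` for `n : ℤ`, for a homeomorphism `T`. -/
def iterZ [TopologicalSpace X] (T : X ≃ₜ X) : ℤ → X → X
  | Int.ofNat n => (⇑T)^[n]
  | Int.negSucc n => (⇑T.symm)^[n + 1]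

/-- `T` is expansive with expansive constant `δ`. -/
def ExpansiveWith [MetricSpace X] (T : X ≃ₜ X) (δ : ℝ) : Prop :=
  ∀ x y : X, x ≠ y → ∃ n : ℤ, δ < dist (iterZ T n x) (iterZ T n y)

/-- `K ⪰ 𝒲` : `K` is contained in some member of the family `𝒲`. -/
def Refines (K : Set X) (W : Finset (Set X)) : Prop := ∃ A ∈ W, K ⊆ A

/-- The join `U ∨ V` of two finite covers. -/
def covJoin (U V : Finset (Set X)) : Finset (Set X) :=
  letI := Classical.decEq (Set X)
  (U ×ˢ V).image fun p => p.1 ∩ p.2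

/-- `dynCov T U n = U_0^{n-1} = ⋁_{i=0}^{n-1} T^{-i} U` (with `U_0^{-1} = {univ}`). -/
def dynCov (T : X → X) (U : Finset (Set X)) : ℕ → Finset (Set X)
  | 0 => {(univ : Set X)}
  | n + 1 =>
      letI := Classical.decEq (Set X)
      covJoin (dynCov T U n) (U.image fun A => T^[n] ⁻¹' A)

/-- `n_{T,U}(K)`: `0` if `K ⋠ U`; `+∞` if `T^i K ⪰ U` for all `i`; otherwise the largest `j`
with `T^i K ⪰ U` for all `0 ≤ i ≤ j-1`. -/
def nTU (T : X → X) (U : Finset (Set X)) (K : Set X) : ℕ∞ :=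
  ⨆ (j : ℕ) (_ : ∀ i < j, Refines (T^[i] '' K) U), (j : ℕ∞)

/-- `e^{-λ n}` for `n : ℕ∞`, valued in `ℝ≥0∞` (with the conventions `e^{-λ·∞} = 0` for `λ > 0`,
`= 1` for `λ = 0` and `= ∞` for `λ < 0`). -/
def expWeight (lam : ℝ) (n : ℕ∞) : ℝ≥0∞ :=
  if n = ⊤ then (if 0 < lam then 0 else if lam = 0 then 1 else ⊤)
  else ENNReal.ofReal (Real.exp (-(lam * (n.toNat : ℝ))))

/-- `m_{T,U}(K,λ,k)`: the infimum of `∑_{E ∈ 𝓔} e^{-λ n_{T,U}(E)}` over all countable families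
`𝓔` of subsets of `X` with `∪𝓔 ⊇ K` and `E ⪰ U_0^{k-1}` for every `E ∈ 𝓔`. -/
def mTU (T : X → X) (U : Finset (Set X)) (K : Set X) (lam : ℝ) (k : ℕ) : ℝ≥0∞ :=
  ⨅ (ℰ : Set (Set X)) (_ : ℰ.Countable ∧ K ⊆ ⋃₀ ℰ ∧ ∀ E ∈ ℰ, Refines E (dynCov T U k)),
    ∑' E : ℰ, expWeight lam (nTU T U (E : Set X))

/-- `m_{T,U}(K,λ) = lim_{k→∞} m_{T,U}(K,λ,k)`; since `m_{T,U}(K,λ,k)` is nondecreasing in `k`,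
the limit is the supremum. -/
def mTUlim (T : X → X) (U : Finset (Set X)) (K : Set X) (lam : ℝ) : ℝ≥0∞ :=
  ⨆ k : ℕ, mTU T U K lam k

/-- `h^B_U(T,K) = inf {λ : m_{T,U}(K,λ) = 0}`. -/
def hBU (T : X → X) (U : Finset (Set X)) (K : Set X) : EReal :=
  ⨅ (lam : ℝ) (_ : mTUlim T U K lam = 0), (lam : EReal)

/-- The dimensional entropy `h^B(T,K) = sup_U h^B_U(T,K)`, supremum over finite open covers. -/
def hB [TopologicalSpace X] (T : X → X) (K : Set X) : EReal :=
  ⨆ (U : Finset (Set X)) (_ : (∀ A ∈ U, IsOpen A) ∧ ⋃₀ (↑U : Set (Set X)) = univ),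
    hBU T U K

/-- `N(U,K)`: the minimal cardinality of a subfamily of `U` covering `K` (`0` for `K = ∅`,
`∞` if no subfamily covers `K`). -/
def covCard (U : Finset (Set X)) (K : Set X) : ℝ≥0∞ :=
  ⨅ (V : Finset (Set X)) (_ : V ⊆ U ∧ K ⊆ ⋃₀ (↑V : Set (Set X))), (V.card : ℝ≥0∞)

/-- `h_U(T,K) = limsup_{n→∞} (1/n) log N(U_0^{n-1},K)`. -/
def hCov (T : X → X) (U : Finset (Set X)) (K : Set X) : EReal :=
  Filter.atTop.limsup fun n : ℕ => ENNReal.log (covCard (dynCov T U n) K) / (n : EReal)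

/-- Topological entropy of a subset via open covers: `h(T,K) = sup_U h_U(T,K)`. -/
def hCovSup [TopologicalSpace X] (T : X → X) (K : Set X) : EReal :=
  ⨆ (U : Finset (Set X)) (_ : (∀ A ∈ U, IsOpen A) ∧ ⋃₀ (↑U : Set (Set X)) = univ),
    hCov T U K

/-- The atom of the (finite) partition `P` containing `x`. -/
def atomAt (P : Finset (Set X)) (x : X) : Set X := ⋃₀ {A | A ∈ P ∧ x ∈ A}

/-- `P` is a finite Borel partition. -/
def IsFinPartition [MeasurableSpace X] (P : Finset (Set X)) : Prop :=
  (∀ A ∈ P, MeasurableSet A) ∧ ⋃₀ (↑P : Set (Set X)) = univ ∧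
    (↑P : Set (Set X)).Pairwise fun A B => Disjoint A B

/-- The Shannon entropy `H_μ(P) = ∑_{A ∈ P} -μ(A) log μ(A)` of a finite partition. -/
def partEnt [MeasurableSpace X] (μ : Measure X) (P : Finset (Set X)) : ℝ :=
  ∑ A ∈ P, -((μ A).toReal * Real.log (μ A).toReal)

/-- The measure-theoretic (Kolmogorov–Sinai) entropy `h_μ(T)`: the supremum over finite Borel
partitions `P` of `lim_n (1/n) H_μ(P_0^{n-1})`; by subadditivity this limit is the infimum. -/
def ksEntropy [MeasurableSpace X] (T : X → X) (μ : Measure X) : EReal :=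
  ⨆ (P : Finset (Set X)) (_ : IsFinPartition P),
    ⨅ n : ℕ, ((partEnt μ (dynCov T P (n + 1)) / (n + 1) : ℝ) : EReal)

/-- `π` is a principal factor map from `(X,T)` to `(Y,S)` : `h_μ(T) = h_{πμ}(S)` for every
`T`-invariant Borel probability measure `μ`. -/
def IsPrincipal [MeasurableSpace X] [MeasurableSpace Y] (T : X → X) (S : Y → Y)
    (π : X → Y) : Prop :=
  ∀ μ : Measure X, IsProbabilityMeasure μ → Measure.map T μ = μ →
    ksEntropy T μ = ksEntropy S (Measure.map π μ)

/-- The relative topological entropy `h_top(T,X|π) = sup_{y ∈ Y} h(T, π^{-1}(y))`. -/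
def relEnt [PseudoMetricSpace X] (T : X → X) (π : X → Y) : EReal :=
  ⨆ y : Y, subEnt T (π ⁻¹' {y})

/-- The canonical conversion `EReal → ℝ≥0∞` (`⊥` and negative reals go to `0`). -/
def erealToENNReal (x : EReal) : ℝ≥0∞ := if x = ⊤ then ⊤ else ENNReal.ofReal x.toReal

/-! By compactness, at a given scale every non-empty set `S` has a point all of whose
neighbourhoods carry the entropy of `S`. This is used twice.

An expansive homeomorphism sees its whole entropy at the single scale `δ`: the orbits of two
`ε`-distant points come `δ`-apart within a bounded time `N`, so on a neighbourhood whose backward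
orbits up to time `N` are `δ`-close, `(n, ε)`-separated sets are `(n + N, δ)`-separated.

At a fixed scale, entropy can be lowered to any value `h > 0`. Choose `x ∈ K` all of whose
neighbourhoods carry the entropy of `K`, and let `g k ↑ h`. In a neighbourhood of `x` whose points
stay close to `x` up to time `k`, let `n k` be the first time at which there are more than
`exp (g k * n k)` separated points, and keep just above `exp (g k * n k)` of them. Minimality of
`n k` bounds the number of separated points of the block at every time. The blocks shrink to `x`;
at time `m` those from the `m`-th on are not told apart from `x`, so that only `m` of them
matter, and the union of `{x}` with the blocks has entropy exactly `h`. -/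

open ExpGrowth

section ExpGrowth

variable {u : ℕ → ℝ≥0∞}

theorem expGrowthSup_natCast : expGrowthSup (fun n ↦ (n : ℝ≥0∞)) = 0 := by
  have hlog : Tendsto (fun n : ℕ ↦ Real.log n / n) atTop (𝓝 0) :=
    Real.isLittleO_log_id_atTop.tendsto_div_nhds_zero.comp tendsto_natCast_atTop_atTop
  refine Tendsto.limsup_eq
    (((continuous_coe_real_ereal.tendsto 0).comp hlog).congr' ?_)
  filter_upwards [eventually_gt_atTop 0] with n hn
  rw [Function.comp_apply, EReal.coe_div, ← ENNReal.ofReal_natCast n,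
    ENNReal.log_ofReal_of_pos (by positivity), EReal.coe_natCast]

theorem expGrowthSup_natCast_mul_le (u : ℕ → ℝ≥0∞) :
    expGrowthSup (fun n ↦ n * u n) ≤ expGrowthSup u := by
  have hmul := expGrowthSup_mul_le (u := fun n ↦ (n : ℝ≥0∞)) (v := u)
    (by simp [expGrowthSup_natCast]) (by simp [expGrowthSup_natCast])
  rwa [expGrowthSup_natCast, zero_add] at hmul

theorem expGrowthSup_comp_add_right (hu : Monotone u) (N : ℕ) :
    expGrowthSup (fun n ↦ u (n + N)) = expGrowthSup u := by
  have hlim : Tendsto (fun n : ℕ ↦ ((n + N : ℕ) : EReal) / n) atTop (𝓝 1) := by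
    have hreal := tendsto_add_mul_div_add_mul_atTop_nhds (N : ℝ) 0 1 one_ne_zero
    simp only [one_mul, zero_add, div_one] at hreal
    refine ((continuous_coe_real_ereal.tendsto 1).comp hreal).congr fun n ↦ ?_
    simp [EReal.coe_div, add_comm]
  have hcomp := hu.expGrowthSup_comp hlim one_ne_zero (by decide)
  rwa [one_mul] at hcomp

theorem le_expGrowthSup_of_tendsto {g : ℕ → EReal} {a : EReal} (hg : Tendsto g atTop (𝓝 a))
    {n : ℕ → ℕ} (hn : Tendsto n atTop atTop) (hu : ∀ k, EReal.exp (g k * n k) ≤ u (n k)) :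
    a ≤ expGrowthSup u := by
  refine le_expGrowthSup_iff.2 fun b hb ↦ hn.frequently (Eventually.frequently ?_)
  filter_upwards [hg.eventually_const_le hb] with k hk
  exact le_trans (by gcongr) (hu k)

theorem exists_exp_mul_lt_of_lt_expGrowthSup {g : EReal} (hg : g < expGrowthSup u) :
    ∃ n : ℕ, EReal.exp (g * n) < u n := by
  contrapose! hg
  exact Eventually.expGrowthSup_le (.of_forall hg)

end ExpGrowth

section Finite

variable {α : Type*}

theorem exists_subset_lt_card_le_add_one {c : ℝ≥0∞} {F : Finset α} (hc : c < F.card) :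
    ∃ E ⊆ F, c < E.card ∧ E.card ≤ c + 1 := by
  lift c to NNReal using hc.ne_top
  have hfloor : ⌊c⌋₊ + 1 ≤ F.card := (Nat.floor_lt c.2).2 (by exact_mod_cast hc)
  obtain ⟨E, hEF, hE⟩ := Finset.exists_subset_card_eq hfloor
  refine ⟨E, hEF, ?_, ?_⟩ <;> rw [hE]
  · exact_mod_cast Nat.lt_floor_add_one c
  · push_cast
    gcongr
    exact_mod_cast Nat.floor_le c.2

theorem finite_iUnion_diff_of_hasAntitoneBasis {l : Filter α} {U E : ℕ → Set α}
    (hU : l.HasAntitoneBasis U) (hEU : ∀ k, E k ⊆ U k) (hE : ∀ k, (E k).Finite)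
    {V : Set α} (hV : V ∈ l) : ((⋃ k, E k) \ V).Finite := by
  obtain ⟨N, -, hN⟩ := hU.toHasBasis.mem_iff.1 hV
  refine ((finite_Iio N).biUnion fun k _ ↦ hE k).subset ?_
  rintro y ⟨hy, hyV⟩
  obtain ⟨k, hk⟩ := mem_iUnion.1 hy
  refine mem_biUnion (x := k) (not_le.1 fun hNk ↦ hyV (hN (hU.antitone hNk (hEU k hk)))) hk

end Finite

section LimitPoint

variable {S : Set X} {x y : X}

theorem isCompact_insert_of_finite_diff [TopologicalSpace X]
    (hS : ∀ V ∈ 𝓝 x, (S \ V).Finite) : IsCompact (insert x S) := by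
  have htendsto : Tendsto ((↑) : S → X) cofinite (𝓝 x) := fun V hV ↦
    ((hS V hV).preimage Subtype.val_injective.injOn).subset fun s hs ↦ (⟨s.2, hs⟩ : (s : X) ∈ S \ V)
  simpa using htendsto.isCompact_insert_range_of_cofinite

theorem eq_of_accPt_insert_of_finite_diff [TopologicalSpace X] [T2Space X]
    (hS : ∀ V ∈ 𝓝 x, (S \ V).Finite) (hy : AccPt y (𝓟 (insert x S))) : y = x := by
  by_contra hne
  obtain ⟨W, V, hW, hV, hWV⟩ := t2_separation_nhds hne
  refine Set.Infinite.of_accPt (hy.nhds_inter hW) (((hS V hV).insert x).subset ?_)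
  rintro z ⟨hzW, rfl | hzS⟩
  · exact mem_insert _ _
  · exact mem_insert_of_mem _ ⟨hzS, hWV.notMem_of_mem_left hzW⟩

end LimitPoint

section SeparatedSets

variable [PseudoMetricSpace X] {T : X → X} {n : ℕ} {ε : ℝ} {K L : Set X}

theorem IsSep.mono_set (hL : IsSep T n ε L) (h : K ⊆ L) : IsSep T n ε K :=
  Set.Pairwise.mono h hL

theorem IsSep.mono_time {m : ℕ} (hK : IsSep T m ε K) (h : m ≤ n) : IsSep T n ε K :=
  Set.Pairwise.imp hK fun _ _ ⟨i, hi, hlt⟩ ↦ ⟨i, hi.trans_le h, hlt⟩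

theorem IsSep.card_le_sepMaxCard {E : Finset X} (hE : IsSep T n ε (E : Set X))
    (hEK : (E : Set X) ⊆ K) : (E.card : ℝ≥0∞) ≤ sepMaxCard T n ε K :=
  le_iSup₂_of_le E ⟨hEK, hE⟩ le_rfl

theorem sepMaxCard_mono (h : K ⊆ L) : sepMaxCard T n ε K ≤ sepMaxCard T n ε L :=
  iSup₂_le fun _ hE ↦ hE.2.card_le_sepMaxCard (hE.1.trans h)

theorem monotone_sepMaxCard_time (T : X → X) (ε : ℝ) (K : Set X) :
    Monotone fun n ↦ sepMaxCard T n ε K :=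
  fun _ _ h ↦ iSup₂_le fun _ hE ↦ (hE.2.mono_time h).card_le_sepMaxCard hE.1

theorem sepMaxCard_coe_finset_le (F : Finset X) : sepMaxCard T n ε (F : Set X) ≤ F.card :=
  iSup₂_le fun _ hE ↦ by exact_mod_cast Finset.card_le_card (Finset.coe_subset.1 hE.1)

theorem sepMaxCard_empty : sepMaxCard T n ε ∅ = 0 := by
  simpa using sepMaxCard_coe_finset_le (T := T) (n := n) (ε := ε) ∅

theorem one_le_sepMaxCard (hK : K.Nonempty) : 1 ≤ sepMaxCard T n ε K := by
  obtain ⟨x, hx⟩ := hK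
  have hsep : IsSep T n ε (({x} : Finset X) : Set X) := by simp [IsSep]
  simpa using hsep.card_le_sepMaxCard (by simpa using hx)

theorem sepMaxCard_union_le :
    sepMaxCard T n ε (K ∪ L) ≤ sepMaxCard T n ε K + sepMaxCard T n ε L := by
  classical
  refine iSup₂_le fun E ⟨hE, hsep⟩ ↦ ?_
  have hK : ((E.filter (· ∈ K)).card : ℝ≥0∞) ≤ sepMaxCard T n ε K :=
    (hsep.mono_set (Finset.filter_subset _ E)).card_le_sepMaxCard fun x hx ↦
      (Finset.mem_filter.1 hx).2
  have hL : ((E.filter (· ∉ K)).card : ℝ≥0∞) ≤ sepMaxCard T n ε L :=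
    (hsep.mono_set (Finset.filter_subset _ E)).card_le_sepMaxCard fun x hx ↦
      (hE (Finset.mem_filter.1 hx).1).resolve_left (Finset.mem_filter.1 hx).2
  calc (E.card : ℝ≥0∞)
      = (E.filter (· ∈ K)).card + (E.filter (· ∉ K)).card := by
        exact_mod_cast (Finset.card_filter_add_card_filter_not (· ∈ K)).symm
    _ ≤ sepMaxCard T n ε K + sepMaxCard T n ε L := add_le_add hK hL

theorem sepMaxCard_biUnion_Iio_le {E : ℕ → Set X} {c : ℝ≥0∞} {m : ℕ}
    (hE : ∀ k < m, sepMaxCard T n ε (E k) ≤ c) :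
    sepMaxCard T n ε (⋃ k < m, E k) ≤ m * c := by
  induction m with
  | zero => simp [sepMaxCard_empty]
  | succ m ih =>
    rw [biUnion_lt_succ, Nat.cast_add_one, add_mul, one_mul]
    exact sepMaxCard_union_le.trans
      (add_le_add (ih fun k hk ↦ hE k (hk.trans m.lt_succ_self)) (hE m m.lt_succ_self))

end SeparatedSets

section BowenBall

variable [PseudoMetricSpace X] {T : X → X} {n : ℕ} {ε r : ℝ} {x : X} {K : Set X}

/-- The open Bowen ball of radius `r` and length `n` about `x`: the ball about `x` for the metric
`d_n`, except that it is all of `X` when `n = 0`, even for `r ≤ 0`. -/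
def bowenBall (T : X → X) (n : ℕ) (r : ℝ) (x : X) : Set X :=
  {y | ∀ i < n, dist (T^[i] y) (T^[i] x) < r}

theorem antitone_bowenBall (T : X → X) (r : ℝ) (x : X) : Antitone fun n ↦ bowenBall T n r x :=
  fun _ _ h _ hy i hi ↦ hy i (hi.trans_le h)

theorem bowenBall_mem_nhds (hT : Continuous T) (hr : 0 < r) : bowenBall T n r x ∈ 𝓝 x := by
  refine (eventually_all_finite (finite_Iio n)).2 fun i _ ↦ ?_
  exact (hT.iterate i).continuousAt.eventually (ball_mem_nhds _ hr)

theorem dist_iterate_lt_of_mem_bowenBall {y z : X} (hy : y ∈ bowenBall T n (ε / 2) x)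
    (hz : z ∈ bowenBall T n (ε / 2) x) {i : ℕ} (hi : i < n) :
    dist (T^[i] y) (T^[i] z) < ε := by
  linarith [hy i hi, hz i hi, dist_triangle_right (T^[i] y) (T^[i] z) (T^[i] x)]

theorem sepMaxCard_le_one_of_subset_bowenBall (hK : K ⊆ bowenBall T n (ε / 2) x) :
    sepMaxCard T n ε K ≤ 1 := by
  refine iSup₂_le fun E ⟨hEK, hE⟩ ↦ ?_
  have hsub : (E : Set X).Subsingleton := fun y hy z hz ↦ by
    by_contra hyz
    obtain ⟨i, hi, hlt⟩ := hE hy hz hyz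
    exact hlt.not_gt (dist_iterate_lt_of_mem_bowenBall (hK (hEK hy)) (hK (hEK hz)) hi)
  exact_mod_cast Finset.card_le_one_iff_subsingleton.2 hsub

end BowenBall

section Entropy

variable [PseudoMetricSpace X] {T : X → X} {ε : ℝ} {K L : Set X} {x : X}

theorem sepEnt_eq_expGrowthSup (T : X → X) (ε : ℝ) (K : Set X) :
    sepEnt T ε K = expGrowthSup fun n ↦ sepMaxCard T n ε K := rfl

theorem sepEnt_le_subEnt (hε : 0 < ε) : sepEnt T ε K ≤ subEnt T K :=
  le_iSup₂_of_le ε hε le_rfl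

theorem sepEnt_mono (h : K ⊆ L) : sepEnt T ε K ≤ sepEnt T ε L :=
  expGrowthSup_monotone fun _ ↦ sepMaxCard_mono h

theorem sepEnt_empty : sepEnt T ε ∅ = ⊥ := by
  simp only [sepEnt_eq_expGrowthSup, sepMaxCard_empty]
  exact expGrowthSup_zero

theorem sepEnt_nonneg (hK : K.Nonempty) : 0 ≤ sepEnt T ε K :=
  (expGrowthSup_const one_ne_zero ENNReal.one_ne_top).ge.trans
    (expGrowthSup_monotone fun _ ↦ one_le_sepMaxCard hK)

theorem sepEnt_union_le : sepEnt T ε (K ∪ L) ≤ max (sepEnt T ε K) (sepEnt T ε L) :=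
  (expGrowthSup_monotone fun _ ↦ sepMaxCard_union_le).trans_eq expGrowthSup_add

theorem sepEnt_singleton : sepEnt T ε {x} = 0 := by
  refine le_antisymm ?_ (sepEnt_nonneg (singleton_nonempty x))
  refine (expGrowthSup_monotone fun n ↦ ?_).trans_eq
    (expGrowthSup_const one_ne_zero ENNReal.one_ne_top)
  simpa using sepMaxCard_coe_finset_le (T := T) (n := n) (ε := ε) {x}

theorem exists_forall_nhds_sepEnt_inter_eq {S : Set X} (hS : S.Nonempty) (hK : IsCompact K)
    (hSK : S ⊆ K) : ∃ x ∈ K, ∀ U ∈ 𝓝 x, sepEnt T ε (S ∩ U) = sepEnt T ε S := by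
  by_contra! hsmall
  have hlt : sepEnt T ε (S ∩ K) < sepEnt T ε S := by
    refine hK.induction_on (p := fun A ↦ sepEnt T ε (S ∩ A) < sepEnt T ε S) ?_ ?_ ?_ ?_
    · rw [inter_empty, sepEnt_empty]
      exact EReal.bot_lt_zero.trans_le (sepEnt_nonneg hS)
    · exact fun A B hAB hB ↦ (sepEnt_mono (inter_subset_inter_right S hAB)).trans_lt hB
    · intro A B hA hB
      rw [inter_union_distrib_left]
      exact sepEnt_union_le.trans_lt (max_lt hA hB)
    · intro x hx
      obtain ⟨U, hU, hne⟩ := hsmall x hx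
      exact ⟨U, mem_nhdsWithin_of_mem_nhds hU,
        lt_of_le_of_ne (sepEnt_mono inter_subset_left) hne⟩
  rw [inter_eq_left.2 hSK] at hlt
  exact hlt.false

theorem sepEnt_insert_iUnion_le (hε : 0 < ε) {E : ℕ → Set X} {u : ℕ → ℝ≥0∞}
    (hE : ∀ k, E k ⊆ bowenBall T k (ε / 2) x) (hu : ∀ k m, sepMaxCard T m ε (E k) ≤ u m) :
    sepEnt T ε (insert x (⋃ k, E k)) ≤ max 0 (expGrowthSup u) := by
  have hsub (m : ℕ) : insert x (⋃ k, E k) ⊆ bowenBall T m (ε / 2) x ∪ ⋃ k < m, E k := by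
    refine insert_subset (.inl fun i _ ↦ by simpa using hε) (iUnion_subset fun k ↦ ?_)
    rcases lt_or_ge k m with hkm | hmk
    · exact subset_union_of_subset_right (subset_biUnion_of_mem (u := E) (mem_Iio.2 hkm)) _
    · exact ((hE k).trans (antitone_bowenBall T _ x hmk)).trans subset_union_left
  have hcard (m : ℕ) : sepMaxCard T m ε (insert x (⋃ k, E k)) ≤ 1 + m * u m :=
    calc sepMaxCard T m ε (insert x (⋃ k, E k))
        ≤ sepMaxCard T m ε (bowenBall T m (ε / 2) x) + sepMaxCard T m ε (⋃ k < m, E k) :=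
          (sepMaxCard_mono (hsub m)).trans sepMaxCard_union_le
      _ ≤ 1 + m * u m := add_le_add (sepMaxCard_le_one_of_subset_bowenBall subset_rfl)
          (sepMaxCard_biUnion_Iio_le fun k _ ↦ hu k m)
  calc sepEnt T ε (insert x (⋃ k, E k))
      ≤ expGrowthSup (fun m ↦ 1 + m * u m) := expGrowthSup_monotone hcard
    _ = max (expGrowthSup fun _ ↦ 1) (expGrowthSup fun m ↦ m * u m) := expGrowthSup_add
    _ ≤ max 0 (expGrowthSup u) := max_le_max
        (expGrowthSup_const one_ne_zero ENNReal.one_ne_top).le (expGrowthSup_natCast_mul_le u)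

theorem exists_minimal_exp_mul_lt_sepMaxCard {g : EReal} (hg : 0 ≤ g) {k : ℕ}
    (hgK : g < sepEnt T ε K) (hK : K ⊆ bowenBall T k (ε / 2) x) :
    ∃ n, k < n ∧ EReal.exp (g * n) < sepMaxCard T n ε K ∧
      ∀ m < n, sepMaxCard T m ε K ≤ EReal.exp (g * m) := by
  classical
  have hex := exists_exp_mul_lt_of_lt_expGrowthSup hgK
  refine ⟨Nat.find hex, lt_of_not_ge fun hle ↦ ?_, Nat.find_spec hex,
    fun m hm ↦ not_lt.1 (Nat.find_min hex hm)⟩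
  refine (Nat.find_spec hex).not_ge ?_
  calc sepMaxCard T (Nat.find hex) ε K
      ≤ 1 := sepMaxCard_le_one_of_subset_bowenBall (hK.trans (antitone_bowenBall T _ x hle))
    _ ≤ EReal.exp (g * Nat.find hex) := EReal.one_le_exp_iff.2 (by positivity)

theorem exists_finset_sepMaxCard_le_two_mul_exp {g : EReal} (hg : 0 ≤ g) {k : ℕ}
    (hgK : g < sepEnt T ε K) (hK : K ⊆ bowenBall T k (ε / 2) x) :
    ∃ E : Finset X, (E : Set X) ⊆ K ∧ (∀ m : ℕ, sepMaxCard T m ε E ≤ 2 * EReal.exp (g * m)) ∧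
      ∃ n, k < n ∧ EReal.exp (g * n) ≤ sepMaxCard T n ε E := by
  obtain ⟨n, hkn, hn, hmin⟩ := exists_minimal_exp_mul_lt_sepMaxCard hg hgK hK
  obtain ⟨F, hF⟩ := lt_iSup_iff.1 hn
  obtain ⟨⟨hFK, hFsep⟩, hFcard⟩ := lt_iSup_iff.1 hF
  obtain ⟨E, hEF, hlt, hle⟩ := exists_subset_lt_card_le_add_one hFcard
  have hEsep : IsSep T n ε (E : Set X) := hFsep.mono_set (Finset.coe_subset.2 hEF)
  have hEK : (E : Set X) ⊆ K := (Finset.coe_subset.2 hEF).trans hFK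
  refine ⟨E, hEK, fun m ↦ ?_, n, hkn, hlt.le.trans (hEsep.card_le_sepMaxCard subset_rfl)⟩
  rw [two_mul]
  rcases lt_or_ge m n with hmn | hnm
  · exact (sepMaxCard_mono hEK).trans ((hmin m hmn).trans le_self_add)
  · calc sepMaxCard T m ε E
        ≤ EReal.exp (g * n) + 1 := (sepMaxCard_coe_finset_le E).trans hle
      _ ≤ EReal.exp (g * m) + EReal.exp (g * m) := by
        gcongr
        exact EReal.one_le_exp_iff.2 (by positivity)

end Entropy

section Lowering

variable {T : X → X} {ε : ℝ} {K : Set X} {x : X} {h : EReal}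

theorem exists_finite_diff_nhds_sepEnt_insert_eq_of_pos [PseudoMetricSpace X] (hT : Continuous T)
    (hε : 0 < ε) (hh : 0 < h) (hx : ∀ U ∈ 𝓝 x, h ≤ sepEnt T ε (K ∩ U)) :
    ∃ S ⊆ K, (∀ V ∈ 𝓝 x, (S \ V).Finite) ∧ sepEnt T ε (insert x S) = h := by
  obtain ⟨g, -, hg, hgh⟩ := exists_seq_strictMono_tendsto' hh
  obtain ⟨V, hV⟩ := (𝓝 x).exists_antitone_basis
  have hU (k : ℕ) : V k ∩ bowenBall T k (ε / 2) x ∈ 𝓝 x :=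
    inter_mem (hV.mem k) (bowenBall_mem_nhds hT (half_pos hε))
  choose E hEsub hEle n hkn hnE using fun k ↦
    exists_finset_sepMaxCard_le_two_mul_exp (hg k).1.le ((hg k).2.trans_le (hx _ (hU k)))
      (inter_subset_right.trans inter_subset_right)
  have hEV (k : ℕ) : (E k : Set X) ⊆ V k := fun y hy ↦ (hEsub k hy).2.1
  have hEball (k : ℕ) : (E k : Set X) ⊆ bowenBall T k (ε / 2) x := fun y hy ↦ (hEsub k hy).2.2
  refine ⟨⋃ k, E k, iUnion_subset fun k ↦ (hEsub k).trans inter_subset_left,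
    fun W hW ↦ finite_iUnion_diff_of_hasAntitoneBasis hV hEV (fun k ↦ (E k).finite_toSet) hW,
    le_antisymm ?_ ?_⟩
  · have hu (k m : ℕ) : sepMaxCard T m ε (E k) ≤ 2 * EReal.exp (h * m) := by
      refine (hEle k m).trans ?_
      gcongr
      exact (hg k).2.le
    calc sepEnt T ε (insert x (⋃ k, E k))
        ≤ max 0 (expGrowthSup fun m : ℕ ↦ 2 * EReal.exp (h * m)) :=
          sepEnt_insert_iUnion_le hε hEball hu
      _ ≤ max 0 (expGrowthSup fun m : ℕ ↦ EReal.exp (h * m)) := max_le_max le_rfl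
          (expGrowthSup_le_of_eventually_le ENNReal.ofNat_ne_top (.of_forall fun _ ↦ le_rfl))
      _ = max 0 h := by rw [expGrowthSup_exp]
      _ = h := max_eq_right hh.le
  · have hn : Tendsto n atTop atTop := tendsto_atTop_mono (fun k ↦ (hkn k).le) tendsto_id
    exact le_expGrowthSup_of_tendsto hgh hn fun k ↦ (hnE k).trans
      (sepMaxCard_mono ((subset_iUnion (fun k ↦ (E k : Set X)) k).trans (subset_insert _ _)))

theorem exists_finite_diff_nhds_sepEnt_insert_eq [PseudoMetricSpace X] (hT : Continuous T)
    (hε : 0 < ε) (hh : 0 ≤ h) (hx : ∀ U ∈ 𝓝 x, h ≤ sepEnt T ε (K ∩ U)) :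
    ∃ S ⊆ K, (∀ V ∈ 𝓝 x, (S \ V).Finite) ∧ sepEnt T ε (insert x S) = h := by
  rcases hh.eq_or_lt with rfl | hpos
  · exact ⟨∅, empty_subset K, by simp, by rw [insert_empty_eq, sepEnt_singleton]⟩
  · exact exists_finite_diff_nhds_sepEnt_insert_eq_of_pos hT hε hpos hx

theorem exists_isCompact_subset_sepEnt_eq [MetricSpace X] (hT : Continuous T) (hε : 0 < ε)
    (hne : K.Nonempty) (hK : IsCompact K) (hh : 0 ≤ h) (hhK : h ≤ sepEnt T ε K) :
    ∃ K' ⊆ K, K'.Nonempty ∧ IsCompact K' ∧ sepEnt T ε K' = h ∧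
      {x | AccPt x (𝓟 K')}.Subsingleton := by
  obtain ⟨x, hxK, hx⟩ := exists_forall_nhds_sepEnt_inter_eq (T := T) (ε := ε) hne hK subset_rfl
  obtain ⟨S, hSK, hS, hSh⟩ :=
    exists_finite_diff_nhds_sepEnt_insert_eq hT hε hh fun U hU ↦ hhK.trans (hx U hU).ge
  exact ⟨insert x S, insert_subset hxK hSK, insert_nonempty x S,
    isCompact_insert_of_finite_diff hS, hSh, subsingleton_of_forall_eq x fun y hy ↦
      eq_of_accPt_insert_of_finite_diff hS hy⟩

end Lowering

section Expansive

variable {n : ℕ} {ε δ : ℝ}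

theorem continuous_iterZ [TopologicalSpace X] (T : X ≃ₜ X) (n : ℤ) : Continuous (iterZ T n) := by
  cases n with
  | ofNat n => exact T.continuous.iterate n
  | negSucc n => exact T.symm.continuous.iterate (n + 1)

theorem iterZ_apply_homeomorph [TopologicalSpace X] (T : X ≃ₜ X) (n : ℤ) (x : X) :
    iterZ T n (T x) = iterZ T (n + 1) x := by
  rcases n with n | _ | n
  · rfl
  · simp [iterZ]
  · change T.symm^[n + 2] (T x) = T.symm^[n + 1] x
    rw [Function.iterate_succ_apply, T.symm_apply_apply]

theorem iterZ_iterate [TopologicalSpace X] (T : X ≃ₜ X) (n : ℤ) (i : ℕ) (x : X) :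
    iterZ T n (T^[i] x) = iterZ T (n + i) x := by
  induction i generalizing x with
  | zero => simp
  | succ i ih =>
    rw [Function.iterate_succ_apply, ih, iterZ_apply_homeomorph, Nat.cast_add_one, add_assoc]

variable [MetricSpace X] {T : X ≃ₜ X}

theorem ExpansiveWith.exists_natAbs_le_lt_dist [CompactSpace X] (hT : ExpansiveWith T δ)
    (hε : 0 < ε) : ∃ N : ℕ, ∀ x y : X, ε ≤ dist x y →
      ∃ n : ℤ, n.natAbs ≤ N ∧ δ < dist (iterZ T n x) (iterZ T n y) := by
  have hcompact : IsCompact {p : X × X | ε ≤ dist p.1 p.2} :=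
    (isClosed_le continuous_const continuous_dist).isCompact
  obtain ⟨t, ht⟩ := hcompact.elim_finite_subcover
    (fun n : ℤ ↦ {p : X × X | δ < dist (iterZ T n p.1) (iterZ T n p.2)})
    (fun n ↦ isOpen_lt continuous_const (((continuous_iterZ T n).comp continuous_fst).dist
      ((continuous_iterZ T n).comp continuous_snd)))
    (fun p hp ↦ mem_iUnion.2 (hT p.1 p.2 (dist_pos.1 (hε.trans_le hp))))
  refine ⟨t.sup Int.natAbs, fun x y hxy ↦ ?_⟩
  obtain ⟨n, hnt, hn⟩ := mem_iUnion₂.1 (ht (show (x, y) ∈ {p : X × X | ε ≤ dist p.1 p.2} from hxy))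
  exact ⟨n, Finset.le_sup hnt, hn⟩

theorem IsSep.add_of_subset_bowenBall_symm {N : ℕ} {E : Set X} {z : X}
    (hN : ∀ x y : X, ε ≤ dist x y →
      ∃ n : ℤ, n.natAbs ≤ N ∧ δ < dist (iterZ T n x) (iterZ T n y))
    (hE : IsSep T n ε E) (hEz : E ⊆ bowenBall T.symm (N + 1) (δ / 2) z) :
    IsSep T (n + N) δ E := by
  intro x hx y hy hxy
  obtain ⟨i, hi, hlt⟩ := hE hx hy hxy
  obtain ⟨j, hj, hjlt⟩ := hN _ _ hlt.le
  rw [iterZ_iterate, iterZ_iterate] at hjlt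
  match hk : j + i, hjlt with
  | .ofNat k, hklt =>
    exact ⟨k, by rw [Int.ofNat_eq_natCast] at hk; omega, hklt⟩
  | .negSucc k, hklt =>
    have hkN : k + 1 < N + 1 := by rw [Int.negSucc_eq] at hk; omega
    exact absurd hklt (dist_iterate_lt_of_mem_bowenBall (hEz hx) (hEz hy) hkN).not_gt

theorem ExpansiveWith.sepEnt_le_sepEnt [CompactSpace X] (hT : ExpansiveWith T δ) (hδ : 0 < δ)
    (hε : 0 < ε) (S : Set X) : sepEnt T ε S ≤ sepEnt T δ S := by
  rcases S.eq_empty_or_nonempty with rfl | hS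
  · simp only [sepEnt_empty, le_refl]
  obtain ⟨N, hN⟩ := hT.exists_natAbs_le_lt_dist hε
  obtain ⟨x, -, hx⟩ :=
    exists_forall_nhds_sepEnt_inter_eq (T := T) (ε := ε) hS isCompact_univ (subset_univ S)
  set A := S ∩ bowenBall T.symm (N + 1) (δ / 2) x
  have hA (n : ℕ) : sepMaxCard T n ε A ≤ sepMaxCard T (n + N) δ A := iSup₂_le fun E hE ↦
    (hE.2.add_of_subset_bowenBall_symm hN (hE.1.trans inter_subset_right)).card_le_sepMaxCard hE.1
  calc sepEnt T ε S
      = sepEnt T ε A := (hx _ (bowenBall_mem_nhds T.symm.continuous (half_pos hδ))).symm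
    _ ≤ expGrowthSup fun n ↦ sepMaxCard T (n + N) δ A := expGrowthSup_monotone hA
    _ = sepEnt T δ A := expGrowthSup_comp_add_right (monotone_sepMaxCard_time T δ A) N
    _ ≤ sepEnt T δ S := sepEnt_mono inter_subset_left

theorem ExpansiveWith.subEnt_eq_sepEnt [CompactSpace X] (hT : ExpansiveWith T δ) (hδ : 0 < δ)
    (S : Set X) : subEnt T S = sepEnt T δ S :=
  (iSup₂_le fun _ hε ↦ hT.sepEnt_le_sepEnt hδ hε S).antisymm (sepEnt_le_subEnt hδ)

end Expansive

theorem expansive_HUL_general [MetricSpace X] {T : X → X} (hT : Continuous T) {δ : ℝ} (hδ : 0 < δ)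
    (hscale : ∀ K : Set X, IsCompact K → subEnt T K = sepEnt T δ K) : HUL T := by
  intro K hne hK h hh hhK
  obtain ⟨K', hK'K, hne', hK', hent, hacc⟩ :=
    exists_isCompact_subset_sepEnt_eq hT hδ hne hK hh (hhK.trans_eq (hscale K hK))
  exact ⟨K', hK'K, hne', hK', (hscale K' hK').trans hent, hacc⟩

/-- Every expansive TDS is hereditarily uniformly lowerable: for each
non-empty compact `K` and each real `0 ≤ h ≤ h(T,K)` there is a non-empty compact `K_h ⊆ K`
with at most one limit point and `h(T,K_h) = h`. -/
theorem expansive_HUL {X : Type*} [MetricSpace X] [CompactSpace X] (T : X ≃ₜ X)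
    (δ : ℝ) (hδ : 0 < δ) (hexp : ExpansiveWith T δ) :
    ∀ K : Set X, K.Nonempty → IsCompact K → ∀ h : ℝ, 0 ≤ h → (h : EReal) ≤ subEnt (⇑T) K →
      ∃ Kh : Set X, Kh ⊆ K ∧ Kh.Nonempty ∧ IsCompact Kh ∧
        {x | AccPt x (𝓟 Kh)}.Subsingleton ∧ subEnt (⇑T) Kh = (h : EReal) := by
  intro K hne hK h hh hhK
  obtain ⟨Kh, hKhK, hne', hKh, hent, hacc⟩ := expansive_HUL_general T.continuous hδ
    (fun S _ ↦ hexp.subEnt_eq_sepEnt hδ S) K hne hK h (EReal.coe_nonneg.2 hh) hhK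
  exact ⟨Kh, hKhK, hne', hKh, hacc, hent⟩
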